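/- Let x ∈ ℤ[i], and let a word w over D = {0, 1, −1, i, −i} be a concatenation w = u_1 u_2 ⋯ u_n of blocks u_ℓ from the set C = {0, 001, 00i, 00(−1), 00(−i)} such that w, read as a digit string (most significant digit first), is a (β, D)-representation of x in base β = i − 1. Let d_ℓ ∈ D be the last digit of the block u_ℓ. Then the number of nonzero digits of w equals the number of indices ℓ with d_ℓ ≠ 0, and the number of optimal representations of x equals e A_{d_1} A_{d_2} ⋯ A_{d_n} eᵀ, where e = (1, 0, 0, 0, 0, 0, 0, 0, 0) ∈ ℤ^{1×9}. -/

import Mathlib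

open Matrix

noncomputable section

/-- The imaginary unit `i` in the Gaussian integers. -/
def gI : GaussianInt := ⟨0, 1⟩

/-- The base `β = i - 1`. -/
def gβ : GaussianInt := ⟨-1, 1⟩

/-- The digit set `D = {0, 1, -1, i, -i}`. -/
def gD : Set GaussianInt := {0, 1, -1, gI, -gI}

/-- Value of a digit string `d_{n-1} ⋯ d_0`, given as a list with the least
significant digit first: `gval [d_0, d_1, …, d_{n-1}] = Σ d_j β^j`. -/
def gval (l : List GaussianInt) : GaussianInt :=
  l.foldr (fun d acc => d + gβ * acc) 0

/-- `l` (least significant digit first) is a `(β, D)`-representation of `x`. -/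
def gIsRep (x : GaussianInt) (l : List GaussianInt) : Prop :=
  (∀ d ∈ l, d ∈ gD) ∧ gval l = x

/-- A representation is normalized if it is empty or its leading digit
(the last entry of the LSD-first list) is nonzero. -/
def gNormalized (l : List GaussianInt) : Prop := l.getLast? ≠ some 0

/-- Number of nonzero digits (Hamming weight). -/
def gweight (l : List GaussianInt) : ℕ := (l.filter (fun d => d ≠ 0)).length

/-- A representation of `x` is optimal if it is normalized and its number of
nonzero digits is minimal among all representations of `x`. -/
def gOptimal (x : GaussianInt) (l : List GaussianInt) : Prop :=
  gIsRep x l ∧ gNormalized l ∧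
    ∀ l' : List GaussianInt, gIsRep x l' → gweight l ≤ gweight l'

/-- The number of optimal representations of `x`. -/
def gnumOpt (x : GaussianInt) : ℕ := Nat.card {l : List GaussianInt // gOptimal x l}

/-- The row vector `e = (1,0,0,0,0,0,0,0,0)`. -/
def e9 : Matrix (Fin 1) (Fin 9) ℤ := !![1,0,0,0,0,0,0,0,0]

/-- The permutation matrix `R = diag(1, P1, P1)`. -/
def R9 : Matrix (Fin 9) (Fin 9) ℤ :=
  !![1,0,0,0,0,0,0,0,0;
     0,0,1,0,0,0,0,0,0;
     0,0,0,1,0,0,0,0,0;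
     0,0,0,0,1,0,0,0,0;
     0,1,0,0,0,0,0,0,0;
     0,0,0,0,0,0,1,0,0;
     0,0,0,0,0,0,0,1,0;
     0,0,0,0,0,0,0,0,1;
     0,0,0,0,0,1,0,0,0]

/-- The matrix `A_1`. -/
def A1 : Matrix (Fin 9) (Fin 9) ℤ :=
  !![1,1,0,0,0,0,0,0,0;
     0,0,0,0,0,0,0,0,0;
     2,0,1,1,0,0,1,0,0;
     2,0,0,1,1,0,0,1,0;
     0,0,0,0,0,0,0,0,0;
     0,0,0,0,0,0,0,0,0;
     1,0,0,1,0,0,0,0,0;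
     0,0,0,0,0,0,0,0,0;
     0,0,0,0,0,0,0,0,0]

/-- The matrix `A_0`. -/
def A0 : Matrix (Fin 9) (Fin 9) ℤ :=
  !![1,0,0,0,0,0,0,0,0;
     0,0,0,0,0,0,1,0,0;
     0,0,0,0,0,0,0,1,0;
     0,0,0,0,0,0,0,0,1;
     0,0,0,0,0,1,0,0,0;
     0,0,0,0,0,0,0,0,0;
     0,0,0,0,0,0,0,0,0;
     0,0,0,0,0,0,0,0,0;
     0,0,0,0,0,0,0,0,0]

/-- The matrix `A_i = Rᵀ A_1 R`. -/
def Ai : Matrix (Fin 9) (Fin 9) ℤ := R9ᵀ * A1 * R9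

/-- The matrix `A_{-1} = Rᵀ A_i R`. -/
def Am1 : Matrix (Fin 9) (Fin 9) ℤ := R9ᵀ * Ai * R9

/-- The matrix `A_{-i} = Rᵀ A_{-1} R`. -/
def Ami : Matrix (Fin 9) (Fin 9) ℤ := R9ᵀ * Am1 * R9

/-- The matrix `A_d` associated with a digit `d ∈ D`. -/
def Amat (d : GaussianInt) : Matrix (Fin 9) (Fin 9) ℤ :=
  if d = 0 then A0
  else if d = 1 then A1
  else if d = gI then Ai
  else if d = -1 then Am1
  else Ami

/-!
If `β ∣ z`, every representation of `z` ends in the digit `0`. Otherwise `z = βa + u` with `u` a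
unit, the last digit is one of the four units `iᵏu`, and the remaining digits represent one of `a`,
`a - u`, `a - u - iu` and `a - iu`. This recursion counts the normalized representations of `z` with
a prescribed number of nonzero digits.

Two units sum to `0` or to a power of `β` times a unit, so adding a digit raises the minimal weight
by at most one. Hence the minimal weight of `βz + u` is at least that of `z`, and that of `β³z + u`
exceeds that of `z` by exactly one. These bounds make most terms of the recursion vanish when the
weight is within one of the minimum. What survives is a vector of nine counts attached to `z` that
is closed under the recursion: `z ↦ βz` acts on it by `A_0`, and `z ↦ β³z + 1` by `A_1`.
Multiplication by `i` permutes its entries by `R`, which turns `A_1` into the other matrices `A_d`.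
At `z = 0` the vector is `e`, and the blocks are read from the most significant end.
-/

/-! ### Units and divisibility by the base -/

lemma gI_mul_gI : gI * gI = -1 := by
  ext <;> simp [gI]

lemma gβ_eq : gβ = gI - 1 := rfl

lemma isUnit_gI : IsUnit gI :=
  IsUnit.of_mul_eq_one (-gI) (by rw [mul_neg, gI_mul_gI, neg_neg])

lemma gaussianInt_isUnit_iff {u : GaussianInt} :
    IsUnit u ↔ u = 1 ∨ u = gI ∨ u = -1 ∨ u = -gI := by
  constructor
  · intro hu
    have hnorm : u.re ^ 2 + u.im ^ 2 = 1 := by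
      have := (Zsqrtd.norm_eq_one_iff' (by norm_num) u).2 hu
      rw [Zsqrtd.norm_def] at this
      linarith
    have hre : -1 ≤ u.re ∧ u.re ≤ 1 := abs_le.1 (abs_le_one_iff_mul_self_le_one.2 (by nlinarith))
    have him : -1 ≤ u.im ∧ u.im ≤ 1 := abs_le.1 (abs_le_one_iff_mul_self_le_one.2 (by nlinarith))
    obtain ⟨a, b⟩ := u
    simp only at hnorm hre him
    obtain ⟨hre₁, hre₂⟩ := hre
    obtain ⟨him₁, him₂⟩ := him
    interval_cases a <;> interval_cases b <;> simp_all [Zsqrtd.ext_iff, gI]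
  · rintro (rfl | rfl | rfl | rfl)
    exacts [isUnit_one, isUnit_gI, isUnit_one.neg, isUnit_gI.neg]

lemma mem_gD_iff {d : GaussianInt} : d ∈ gD ↔ d = 0 ∨ IsUnit d := by
  rw [gaussianInt_isUnit_iff]
  simp only [gD, Set.mem_insert_iff, Set.mem_singleton_iff]
  tauto

lemma exists_eq_gI_pow_mul {d u : GaussianInt} (hd : IsUnit d) (hu : IsUnit u) :
    ∃ k : Fin 4, d = gI ^ (k : ℕ) * u := by
  obtain ⟨v, rfl⟩ := hu
  have hquot := gaussianInt_isUnit_iff.1 (hd.mul v⁻¹.isUnit)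
  simp only [Units.mul_inv_eq_iff_eq_mul] at hquot
  rcases hquot with h | h | h | h
  · exact ⟨0, by simpa using h⟩
  · exact ⟨1, by simpa using h⟩
  · exact ⟨2, by simpa [pow_two, gI_mul_gI] using h⟩
  · exact ⟨3, by simpa [pow_succ, gI_mul_gI] using h⟩

lemma not_isUnit_gβ : ¬ IsUnit gβ := by
  simp [gaussianInt_isUnit_iff, Zsqrtd.ext_iff, gβ, gI]

lemma not_gβ_dvd_of_isUnit {u : GaussianInt} (hu : IsUnit u) : ¬ gβ ∣ u :=
  fun h => not_isUnit_gβ (isUnit_of_dvd_unit h hu)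

lemma gβ_ne_zero : gβ ≠ 0 := by
  simp [Zsqrtd.ext_iff, gβ]

lemma gI_pow_mul_injective {u : GaussianInt} (hu : IsUnit u) :
    Function.Injective fun k : Fin 4 => gI ^ (k : ℕ) * u := by
  intro k l h
  have hpow : gI ^ (k : ℕ) = gI ^ (l : ℕ) := hu.mul_right_cancel h
  fin_cases k <;> fin_cases l <;> simp_all [pow_succ, Zsqrtd.ext_iff, gI]

lemma gβ_dvd_or_exists_eq_gβ_mul_add_one (z : GaussianInt) :
    gβ ∣ z ∨ ∃ a, z = gβ * a + 1 := by
  rcases Int.emod_two_eq_zero_or_one (z.re + z.im) with h0 | h0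
  · refine Or.inl ⟨⟨(z.im - z.re) / 2, -(z.re + z.im) / 2⟩, ?_⟩
    ext <;> simp [gβ] <;> omega
  · refine Or.inr ⟨⟨(z.im - z.re + 1) / 2, -(z.re + z.im - 1) / 2⟩, ?_⟩
    ext <;> simp [gβ] <;> omega

lemma gβ_induction {P : GaussianInt → Prop} (zero : P 0)
    (gβ_mul : ∀ a, a ≠ 0 → P a → P (gβ * a)) (gβ_mul_add_one : ∀ a, P (gβ * a + 1))
    (z : GaussianInt) : P z := by
  rcases eq_or_ne z 0 with rfl | hz
  · exact zero
  obtain ⟨n, c, hc, rfl⟩ := WfDvdMonoid.max_power_factor' hz not_isUnit_gβ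
  obtain ⟨a, rfl⟩ := (gβ_dvd_or_exists_eq_gβ_mul_add_one c).resolve_left hc
  induction n with
  | zero => simpa using gβ_mul_add_one a
  | succ n ih =>
    rw [pow_succ', mul_assoc] at hz ⊢
    exact gβ_mul _ (right_ne_zero_of_mul hz) (ih (right_ne_zero_of_mul hz))

/-- The quotient `(βa + u - iᵏu) / β`, that is, what remains of a representation of `βa + u` once
its last digit has been chosen to be `iᵏu`. -/
def unitQuotient (a u : GaussianInt) : Fin 4 → GaussianInt :=
  ![a, a - u, a - u - gI * u, a - gI * u]

lemma gI_pow_mul_add_gβ_mul_unitQuotient (a u : GaussianInt) (k : Fin 4) :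
    gI ^ (k : ℕ) * u + gβ * unitQuotient a u k = gβ * a + u := by
  fin_cases k <;> simp [unitQuotient] <;> grind [gβ_eq, gI_mul_gI]

lemma isUnit_add_isUnit {u v : GaussianInt} (hu : IsUnit u) (hv : IsUnit v) :
    u + v = 0 ∨ ∃ k w, IsUnit w ∧ u + v = gβ ^ (k + 1) * w := by
  obtain ⟨k, rfl⟩ := exists_eq_gI_pow_mul hu hv
  fin_cases k
  · exact Or.inr ⟨1, gI * v, isUnit_gI.mul hv, by simp; grind [gβ_eq, gI_mul_gI]⟩
  · exact Or.inr ⟨0, -(gI * v), (isUnit_gI.mul hv).neg, by simp; grind [gβ_eq, gI_mul_gI]⟩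
  · exact Or.inl (by simp; grind [gβ_eq, gI_mul_gI])
  · exact Or.inr ⟨0, -v, hv.neg, by simp; grind [gβ_eq, gI_mul_gI]⟩

/-! ### Digit strings -/

@[simp] lemma gval_nil : gval [] = 0 := rfl

@[simp] lemma gval_cons (d : GaussianInt) (l : List GaussianInt) :
    gval (d :: l) = d + gβ * gval l := rfl

lemma gval_map_mul (c : GaussianInt) (l : List GaussianInt) :
    gval (l.map (c * ·)) = c * gval l := by
  induction l with
  | nil => simp
  | cons d t ih =>
    simp only [List.map_cons, gval_cons, ih]
    ring

lemma gweight_cons_zero (l : List GaussianInt) : gweight (0 :: l) = gweight l := by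
  simp [gweight]

lemma gweight_cons_of_ne_zero {d : GaussianInt} (hd : d ≠ 0) (l : List GaussianInt) :
    gweight (d :: l) = gweight l + 1 := by
  simp [gweight, hd]

lemma gweight_append (l m : List GaussianInt) : gweight (l ++ m) = gweight l + gweight m := by
  simp [gweight]

lemma gweight_cons (d : GaussianInt) (l : List GaussianInt) :
    gweight (d :: l) = gweight [d] + gweight l := gweight_append [d] l

lemma gweight_map_mul {c : GaussianInt} (hc : c ≠ 0) (l : List GaussianInt) :
    gweight (l.map (c * ·)) = gweight l := by
  simp [gweight, List.filter_map, Function.comp_def, hc]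

lemma gNormalized_nil : gNormalized [] := by
  simp [gNormalized]

lemma gNormalized_cons {d : GaussianInt} {l : List GaussianInt} :
    gNormalized (d :: l) ↔ gNormalized l ∧ (l = [] → d ≠ 0) := by
  cases l <;> simp [gNormalized]

lemma gNormalized_map_mul {c : GaussianInt} (hc : c ≠ 0) {l : List GaussianInt} :
    gNormalized (l.map (c * ·)) ↔ gNormalized l := by
  simp [gNormalized, List.getLast?_map, hc]

lemma gIsRep_nil {z : GaussianInt} : gIsRep z [] ↔ z = 0 := by
  simp [gIsRep, eq_comm]

lemma gIsRep_cons {z d : GaussianInt} {l : List GaussianInt} :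
    gIsRep z (d :: l) ↔ d ∈ gD ∧ ∃ a, gIsRep a l ∧ z = d + gβ * a := by
  simp only [gIsRep, List.forall_mem_cons, gval_cons, and_assoc,
    eq_comm (b := z), exists_and_left, exists_eq_left']

lemma gIsRep.map_mul {v z : GaussianInt} {l : List GaussianInt} (hl : gIsRep z l)
    (hv : IsUnit v) : gIsRep (v * z) (l.map (v * ·)) := by
  refine ⟨?_, by rw [gval_map_mul, hl.2]⟩
  simp only [List.forall_mem_map]
  intro d hd
  rcases mem_gD_iff.1 (hl.1 d hd) with rfl | hdu
  · simp [gD]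
  · exact mem_gD_iff.2 (Or.inr (hv.mul hdu))

lemma gIsRep_gβ_mul_cons {a d : GaussianInt} {l : List GaussianInt} :
    gIsRep (gβ * a) (d :: l) ↔ d = 0 ∧ gIsRep a l := by
  rw [gIsRep_cons]
  constructor
  · rintro ⟨hd, b, hb, hab⟩
    rcases mem_gD_iff.1 hd with rfl | hdu
    · rw [zero_add] at hab
      exact ⟨rfl, mul_left_cancel₀ gβ_ne_zero hab ▸ hb⟩
    · exact absurd ⟨a - b, by linear_combination -hab⟩ (not_gβ_dvd_of_isUnit hdu)
  · rintro ⟨rfl, ha⟩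
    exact ⟨by simp [gD], a, ha, (zero_add _).symm⟩

lemma gIsRep_gβ_mul_add_unit {a u : GaussianInt} (hu : IsUnit u) {l : List GaussianInt} :
    gIsRep (gβ * a + u) l ↔
      ∃ k : Fin 4, ∃ t, l = gI ^ (k : ℕ) * u :: t ∧ gIsRep (unitQuotient a u k) t := by
  constructor
  · intro hl
    cases l with
    | nil =>
      rw [gIsRep_nil] at hl
      exact absurd ⟨-a, by linear_combination hl⟩ (not_gβ_dvd_of_isUnit hu)
    | cons d t =>
      obtain ⟨hd, b, hb, hab⟩ := gIsRep_cons.1 hl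
      rcases mem_gD_iff.1 hd with rfl | hdu
      · exact absurd ⟨b - a, by linear_combination hab⟩ (not_gβ_dvd_of_isUnit hu)
      · obtain ⟨k, rfl⟩ := exists_eq_gI_pow_mul hdu hu
        rw [← gI_pow_mul_add_gβ_mul_unitQuotient a u k] at hab
        exact ⟨k, t, rfl, mul_left_cancel₀ gβ_ne_zero (add_left_cancel hab) ▸ hb⟩
  · rintro ⟨k, t, rfl, ht⟩
    exact gIsRep_cons.2 ⟨mem_gD_iff.2 (Or.inr ((isUnit_gI.pow _).mul hu)), _, ht,
      (gI_pow_mul_add_gβ_mul_unitQuotient a u k).symm⟩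

lemma gIsRep_zero_cons {a : GaussianInt} {l : List GaussianInt} (hl : gIsRep a l) :
    gIsRep (gβ * a) (0 :: l) :=
  gIsRep_gβ_mul_cons.2 ⟨rfl, hl⟩

/-- Two nonzero digits in the same position either cancel or leave a single nonzero digit further
up, so carries never multiply. -/
lemma exists_gIsRep_add_gβ_pow_mul {z u : GaussianInt} {l : List GaussianInt} (hl : gIsRep z l)
    (k : ℕ) (hu : IsUnit u) :
    ∃ l', gIsRep (z + gβ ^ k * u) l' ∧ gweight l' ≤ gweight l + 1 := by
  induction l generalizing z k u with
  | nil =>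
    obtain rfl := gIsRep_nil.1 hl
    induction k with
    | zero =>
      refine ⟨[u], gIsRep_cons.2 ⟨mem_gD_iff.2 (Or.inr hu), 0, gIsRep_nil.2 rfl, by simp⟩, ?_⟩
      rw [gweight_cons_of_ne_zero hu.ne_zero]
    | succ k ih =>
      obtain ⟨t, ht, hwt⟩ := ih
      refine ⟨0 :: t, ?_, by rwa [gweight_cons_zero]⟩
      convert gIsRep_zero_cons ht using 1
      ring
  | cons d t ih =>
    obtain ⟨hd, a, ha, rfl⟩ := gIsRep_cons.1 hl
    rcases k with _ | k
    · rcases mem_gD_iff.1 hd with rfl | hdu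
      · refine ⟨u :: t, gIsRep_cons.2 ⟨mem_gD_iff.2 (Or.inr hu), a, ha, by ring⟩, ?_⟩
        rw [gweight_cons_of_ne_zero hu.ne_zero, gweight_cons_zero]
      rw [gweight_cons_of_ne_zero hdu.ne_zero]
      rcases isUnit_add_isUnit hdu hu with hcancel | ⟨k, v, hv, hcarry⟩
      · refine ⟨0 :: t, ?_, by rw [gweight_cons_zero]; omega⟩
        convert gIsRep_zero_cons ha using 1
        linear_combination hcancel
      · obtain ⟨t', ht', hwt⟩ := ih ha k hv
        refine ⟨0 :: t', ?_, by rw [gweight_cons_zero]; omega⟩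
        convert gIsRep_zero_cons ht' using 1
        linear_combination hcarry
    · obtain ⟨t', ht', hwt⟩ := ih ha k hu
      refine ⟨d :: t', gIsRep_cons.2 ⟨hd, _, ht', by ring⟩, ?_⟩
      rw [gweight_cons d t', gweight_cons d t]
      omega

lemma exists_gIsRep_add_intCast_mul {z u : GaussianInt} (hz : ∃ l, gIsRep z l) (hu : IsUnit u)
    (n : ℤ) : ∃ l, gIsRep (z + n * u) l := by
  have add_unit {y v : GaussianInt} (hy : ∃ l, gIsRep y l) (hv : IsUnit v) :
      ∃ l, gIsRep (y + v) l := by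
    obtain ⟨l, hl⟩ := hy
    obtain ⟨l', hl', -⟩ := exists_gIsRep_add_gβ_pow_mul hl 0 hv
    exact ⟨l', by simpa using hl'⟩
  induction n using Int.induction_on with
  | zero => simpa using hz
  | succ n ih =>
    convert add_unit ih hu using 3
    push_cast
    ring
  | pred n ih =>
    convert add_unit ih hu.neg using 3
    push_cast
    ring

lemma exists_gIsRep (z : GaussianInt) : ∃ l, gIsRep z l := by
  have hz : z = 0 + (z.re : GaussianInt) * 1 + (z.im : GaussianInt) * gI := by
    ext <;> simp [gI]
  rw [hz]
  exact exists_gIsRep_add_intCast_mul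
    (exists_gIsRep_add_intCast_mul ⟨[], gIsRep_nil.2 rfl⟩ isUnit_one _) isUnit_gI _

/-! ### Minimal weight -/

/-- The minimal number of nonzero digits in a representation of `z`; the infimum is over a nonempty
set by `exists_gIsRep`. -/
def minWeight (z : GaussianInt) : ℕ :=
  sInf (gweight '' {l | gIsRep z l})

lemma minWeight_le {z : GaussianInt} {l : List GaussianInt} (hl : gIsRep z l) :
    minWeight z ≤ gweight l :=
  Nat.sInf_le ⟨l, hl, rfl⟩

lemma exists_gIsRep_gweight_eq (z : GaussianInt) : ∃ l, gIsRep z l ∧ gweight l = minWeight z :=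
  Nat.sInf_mem (Set.Nonempty.image gweight (exists_gIsRep z))

lemma minWeight_zero : minWeight 0 = 0 :=
  Nat.le_zero.1 (minWeight_le (gIsRep_nil.2 rfl))

lemma minWeight_gβ_mul (z : GaussianInt) : minWeight (gβ * z) = minWeight z := by
  apply le_antisymm
  · obtain ⟨l, hl, hw⟩ := exists_gIsRep_gweight_eq z
    simpa only [gweight_cons_zero, hw] using minWeight_le (gIsRep_zero_cons hl)
  · obtain ⟨l, hl, hw⟩ := exists_gIsRep_gweight_eq (gβ * z)
    rw [← hw]
    cases l with
    | nil =>
      have hz : z = 0 := (mul_eq_zero.1 (gIsRep_nil.1 hl)).resolve_left gβ_ne_zero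
      exact minWeight_le (gIsRep_nil.2 hz)
    | cons d t =>
      obtain ⟨rfl, ht⟩ := gIsRep_gβ_mul_cons.1 hl
      simpa only [gweight_cons_zero] using minWeight_le ht

lemma minWeight_isUnit_mul {v : GaussianInt} (hv : IsUnit v) (z : GaussianInt) :
    minWeight (v * z) = minWeight z := by
  have le {w : GaussianInt} (hw : IsUnit w) (y : GaussianInt) :
      minWeight (w * y) ≤ minWeight y := by
    obtain ⟨l, hl, hweight⟩ := exists_gIsRep_gweight_eq y
    rw [← hweight, ← gweight_map_mul hw.ne_zero]
    exact minWeight_le (hl.map_mul hw)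
  obtain ⟨v, rfl⟩ := hv
  refine le_antisymm (le v.isUnit z) ?_
  simpa using le v⁻¹.isUnit (v * z)

lemma minWeight_add_gβ_pow_mul_le (z : GaussianInt) {u : GaussianInt} (hu : IsUnit u) (k : ℕ) :
    minWeight (z + gβ ^ k * u) ≤ minWeight z + 1 := by
  obtain ⟨l, hl, hw⟩ := exists_gIsRep_gweight_eq z
  obtain ⟨l', hl', hw'⟩ := exists_gIsRep_add_gβ_pow_mul hl k hu
  exact (minWeight_le hl').trans (hw ▸ hw')

lemma minWeight_add_isUnit_le (z : GaussianInt) {u : GaussianInt} (hu : IsUnit u) :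
    minWeight (z + u) ≤ minWeight z + 1 := by
  simpa using minWeight_add_gβ_pow_mul_le z hu 0

lemma minWeight_add_isUnit_add_isUnit_le (z : GaussianInt) {u v : GaussianInt} (hu : IsUnit u)
    (hv : IsUnit v) : minWeight (z + u + v) ≤ minWeight z + 1 := by
  rw [add_assoc]
  rcases isUnit_add_isUnit hu hv with h | ⟨k, w, hw, h⟩
  · simp [h]
  · exact h ▸ minWeight_add_gβ_pow_mul_le z hw (k + 1)

lemma minWeight_le_unitQuotient (a : GaussianInt) {u : GaussianInt} (hu : IsUnit u) (k : Fin 4) :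
    minWeight a ≤ minWeight (unitQuotient a u k) + 1 := by
  have hiu := isUnit_gI.mul hu
  fin_cases k
  · exact Nat.le_succ _
  · simpa [unitQuotient] using minWeight_add_isUnit_le (a - u) hu
  · simpa [unitQuotient] using minWeight_add_isUnit_add_isUnit_le (a - u - gI * u) hiu hu
  · simpa [unitQuotient] using minWeight_add_isUnit_le (a - gI * u) hiu

lemma le_minWeight_gβ_mul_add_isUnit {n : ℕ} {a u : GaussianInt} (hu : IsUnit u)
    (h : ∀ k, n ≤ minWeight (unitQuotient a u k) + 1) : n ≤ minWeight (gβ * a + u) := by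
  obtain ⟨l, hl, hw⟩ := exists_gIsRep_gweight_eq (gβ * a + u)
  obtain ⟨k, t, rfl, ht⟩ := (gIsRep_gβ_mul_add_unit hu).1 hl
  rw [← hw, gweight_cons_of_ne_zero ((isUnit_gI.pow _).mul hu).ne_zero]
  exact (h k).trans (Nat.succ_le_succ (minWeight_le ht))

lemma minWeight_le_gβ_mul_add_isUnit (a : GaussianInt) {u : GaussianInt} (hu : IsUnit u) :
    minWeight a ≤ minWeight (gβ * a + u) :=
  le_minWeight_gβ_mul_add_isUnit hu (minWeight_le_unitQuotient a hu)

lemma unitQuotient_gβ_mul (y u : GaussianInt) :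
    unitQuotient (gβ * y) u =
      ![gβ * y, gβ * y + -u, gβ * (y + gI * u), gβ * y + -(gI * u)] := by
  ext k : 1
  fin_cases k <;> simp [unitQuotient, sub_eq_add_neg]
  grind [gβ_eq, gI_mul_gI]

lemma le_minWeight_gβ_sq_mul_add_isUnit {n : ℕ} {y u : GaussianInt} (hu : IsUnit u)
    (h : n ≤ minWeight y + 1) (h' : n ≤ minWeight (y + gI * u) + 1) :
    n ≤ minWeight (gβ * (gβ * y) + u) := by
  refine le_minWeight_gβ_mul_add_isUnit hu fun k => ?_
  have hneg := minWeight_le_gβ_mul_add_isUnit y hu.neg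
  have hneg' := minWeight_le_gβ_mul_add_isUnit y (isUnit_gI.mul hu).neg
  rw [unitQuotient_gβ_mul]
  fin_cases k <;> simp [minWeight_gβ_mul] <;> omega

lemma minWeight_le_gβ_sq_mul_add_isUnit_add_isUnit (x : GaussianInt) {u v : GaussianInt}
    (hu : IsUnit u) (hv : IsUnit v) : minWeight x ≤ minWeight (gβ * (gβ * (x + u)) + v) := by
  have hiv := isUnit_gI.mul hv
  refine le_minWeight_gβ_sq_mul_add_isUnit hv ?_ ?_
  · simpa using minWeight_add_isUnit_le (x + u) hu.neg
  · simpa using minWeight_add_isUnit_add_isUnit_le (x + u + gI * v) hiv.neg hu.neg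

lemma minWeight_gβ_cube_mul_add_isUnit (x : GaussianInt) {u : GaussianInt} (hu : IsUnit u) :
    minWeight (gβ * (gβ * (gβ * x)) + u) = minWeight x + 1 := by
  apply le_antisymm
  · simpa only [minWeight_gβ_mul] using minWeight_add_isUnit_le (gβ * (gβ * (gβ * x))) hu
  · refine le_minWeight_gβ_sq_mul_add_isUnit hu (by rw [minWeight_gβ_mul]) ?_
    exact Nat.succ_le_succ (minWeight_le_gβ_mul_add_isUnit x (isUnit_gI.mul hu))

/-! ### Counting representations of a given weight -/

/-- The normalized representations of `z` with exactly `w` nonzero digits. The weight is an integer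
so that the digit recursion can lower it without truncation. -/
def repsOfWeight (w : ℤ) (z : GaussianInt) : Set (List GaussianInt) :=
  {l | gIsRep z l ∧ gNormalized l ∧ (gweight l : ℤ) = w}

lemma mem_repsOfWeight {w : ℤ} {z : GaussianInt} {l : List GaussianInt} :
    l ∈ repsOfWeight w z ↔ gIsRep z l ∧ gNormalized l ∧ (gweight l : ℤ) = w := Iff.rfl

lemma eq_nil_of_gIsRep_zero {l : List GaussianInt} (hl : gIsRep 0 l) (hn : gNormalized l) :
    l = [] := by
  induction l with
  | nil => rfl
  | cons d t ih =>
    rw [← mul_zero gβ, gIsRep_gβ_mul_cons] at hl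
    rw [gNormalized_cons] at hn
    exact absurd hl.1 (hn.2 (ih hl.2 hn.1))

lemma repsOfWeight_zero_subset (w : ℤ) : repsOfWeight w 0 ⊆ {[]} :=
  fun _ hl => eq_nil_of_gIsRep_zero hl.1 hl.2.1

lemma repsOfWeight_zero_zero : repsOfWeight 0 0 = {[]} :=
  (repsOfWeight_zero_subset 0).antisymm <|
    Set.singleton_subset_iff.2 ⟨gIsRep_nil.2 rfl, gNormalized_nil, rfl⟩

lemma repsOfWeight_eq_empty {w : ℤ} {z : GaussianInt} (hw : w < minWeight z) :
    repsOfWeight w z = ∅ := by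
  refine Set.eq_empty_of_forall_notMem fun l hl => ?_
  have := minWeight_le hl.1
  have := hl.2.2
  omega

lemma repsOfWeight_gβ_mul (w : ℤ) {a : GaussianInt} (ha : a ≠ 0) :
    repsOfWeight w (gβ * a) = List.cons 0 '' repsOfWeight w a := by
  ext l
  cases l with
  | nil => simp [mem_repsOfWeight, gIsRep_nil, ha, gβ_ne_zero]
  | cons d t =>
    have hne (ht : gIsRep a t) : t ≠ [] := by
      rintro rfl
      exact ha (gIsRep_nil.1 ht)
    simp only [mem_repsOfWeight, gIsRep_gβ_mul_cons, gNormalized_cons, Set.mem_image,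
      List.cons.injEq]
    constructor
    · rintro ⟨⟨rfl, ht⟩, ⟨hn, -⟩, hw⟩
      exact ⟨t, ⟨ht, hn, by rwa [gweight_cons_zero] at hw⟩, rfl, rfl⟩
    · rintro ⟨t, ⟨ht, hn, hw⟩, rfl, rfl⟩
      exact ⟨⟨rfl, ht⟩, ⟨hn, fun h => absurd h (hne ht)⟩, by rwa [gweight_cons_zero]⟩

lemma repsOfWeight_gβ_mul_add_isUnit (w : ℤ) (a : GaussianInt) {u : GaussianInt} (hu : IsUnit u) :
    repsOfWeight w (gβ * a + u) =
      ⋃ k : Fin 4, List.cons (gI ^ (k : ℕ) * u) '' repsOfWeight (w - 1) (unitQuotient a u k) := by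
  ext l
  have hne (k : Fin 4) : gI ^ (k : ℕ) * u ≠ 0 := ((isUnit_gI.pow _).mul hu).ne_zero
  simp only [mem_repsOfWeight, gIsRep_gβ_mul_add_unit hu, Set.mem_iUnion, Set.mem_image]
  constructor
  · rintro ⟨⟨k, t, rfl, ht⟩, hn, hw⟩
    rw [gweight_cons_of_ne_zero (hne k)] at hw
    exact ⟨k, t, ⟨ht, (gNormalized_cons.1 hn).1, by omega⟩, rfl⟩
  · rintro ⟨k, t, ⟨ht, hn, hw⟩, rfl⟩
    refine ⟨⟨k, t, rfl, ht⟩, gNormalized_cons.2 ⟨hn, fun _ => hne k⟩, ?_⟩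
    rw [gweight_cons_of_ne_zero (hne k)]
    omega

lemma repsOfWeight_finite (w : ℤ) (z : GaussianInt) : (repsOfWeight w z).Finite := by
  suffices ∀ (n : ℕ) (w : ℤ) (z : GaussianInt), w < n → (repsOfWeight w z).Finite from
    this (w.toNat + 1) w z (by omega)
  intro n
  induction n with
  | zero =>
    intro w z hw
    simp [repsOfWeight_eq_empty (show w < minWeight z by omega)]
  | succ n ih =>
    intro w z hw
    induction z using gβ_induction with
    | zero => exact (Set.finite_singleton _).subset (repsOfWeight_zero_subset w)
    | gβ_mul a ha iha =>
      rw [repsOfWeight_gβ_mul w ha]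
      exact iha.image _
    | gβ_mul_add_one a =>
      rw [repsOfWeight_gβ_mul_add_isUnit w a isUnit_one]
      exact Set.finite_iUnion fun k => (ih (w - 1) _ (by omega)).image _

/-- The number of normalized representations of `z` with exactly `w` nonzero digits. -/
def numReps (w : ℤ) (z : GaussianInt) : ℤ :=
  (repsOfWeight w z).ncard

lemma gnumOpt_eq_numReps (z : GaussianInt) : (gnumOpt z : ℤ) = numReps (minWeight z) z := by
  have hset : {l | gOptimal z l} = repsOfWeight (minWeight z) z := by
    ext l
    rw [mem_repsOfWeight, Nat.cast_inj]
    constructor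
    · rintro ⟨hr, hn, hmin⟩
      obtain ⟨l', hl', hw⟩ := exists_gIsRep_gweight_eq z
      exact ⟨hr, hn, le_antisymm (hw ▸ hmin l' hl') (minWeight_le hr)⟩
    · rintro ⟨hr, hn, hw⟩
      exact ⟨hr, hn, fun l' hl' => hw ▸ minWeight_le hl'⟩
  rw [numReps, ← hset]
  rfl

lemma numReps_zero_zero : numReps 0 0 = 1 := by
  simp [numReps, repsOfWeight_zero_zero]

lemma numReps_eq_zero {w : ℤ} {z : GaussianInt} (hw : w < minWeight z) : numReps w z = 0 := by
  simp [numReps, repsOfWeight_eq_empty hw]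

lemma numReps_gβ_mul (w : ℤ) (a : GaussianInt) : numReps w (gβ * a) = numReps w a := by
  rcases eq_or_ne a 0 with rfl | ha
  · rw [mul_zero]
  · rw [numReps, numReps, repsOfWeight_gβ_mul w ha,
      Set.ncard_image_of_injective _ List.cons_injective]

lemma numReps_gβ_mul_add_isUnit (w : ℤ) (a : GaussianInt) {u : GaussianInt} (hu : IsUnit u) :
    numReps w (gβ * a + u) = ∑ k, numReps (w - 1) (unitQuotient a u k) := by
  have hdisj : Pairwise (Function.onFun Disjoint fun k : Fin 4 =>
      List.cons (gI ^ (k : ℕ) * u) '' repsOfWeight (w - 1) (unitQuotient a u k)) := by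
    intro k l hkl
    refine Set.disjoint_left.2 ?_
    rintro _ ⟨s, -, rfl⟩ ⟨t, -, h⟩
    exact hkl (gI_pow_mul_injective hu (List.cons.inj h).1.symm)
  rw [numReps, repsOfWeight_gβ_mul_add_isUnit w a hu, Set.ncard_iUnion_of_finite
    (fun k => (repsOfWeight_finite _ _).image _) hdisj, finsum_eq_sum_of_fintype, Nat.cast_sum]
  simp only [Set.ncard_image_of_injective _ List.cons_injective, numReps]

lemma numReps_isUnit_mul {v : GaussianInt} (hv : IsUnit v) (w : ℤ) (z : GaussianInt) :
    numReps w (v * z) = numReps w z := by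
  have le {c : GaussianInt} (hc : IsUnit c) (y : GaussianInt) :
      numReps w y ≤ numReps w (c * y) := by
    rw [numReps, ← Set.ncard_image_of_injective _
      (List.map_injective_iff.2 (mul_right_injective₀ hc.ne_zero)), numReps, Nat.cast_le]
    refine Set.ncard_le_ncard ?_ (repsOfWeight_finite _ _)
    rintro _ ⟨l, ⟨hr, hn, hw⟩, rfl⟩
    exact ⟨hr.map_mul hc, (gNormalized_map_mul hc.ne_zero).2 hn,
      by rwa [gweight_map_mul hc.ne_zero]⟩
  obtain ⟨v, rfl⟩ := hv
  refine le_antisymm ?_ (le v.isUnit z)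
  simpa using le v⁻¹.isUnit (v * z)

lemma numReps_minWeight_gβ_mul_add_isUnit (x : GaussianInt) {u : GaussianInt} (hu : IsUnit u) :
    numReps (minWeight x) (gβ * x + u) = numReps (minWeight x - 1) (x - u) +
      numReps (minWeight x - 1) (x - gI * u) + numReps (minWeight x - 1) (x - u - gI * u) := by
  have hx : numReps (minWeight x - 1) x = 0 := numReps_eq_zero (by omega)
  rw [numReps_gβ_mul_add_isUnit _ x hu, Fin.sum_univ_four]
  simp only [unitQuotient, Matrix.cons_val, hx]
  ring

lemma numReps_gβ_sq_mul_add_isUnit {n : ℕ} {y u : GaussianInt} (hu : IsUnit u)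
    (hy : n ≤ minWeight (gβ * y)) (hyu : n ≤ minWeight (gβ * y + -u))
    (hyiu : n ≤ minWeight (gβ * y + -(gI * u))) :
    numReps n (gβ * (gβ * y) + u) = numReps (n - 1) (y + gI * u) := by
  have vanish {z : GaussianInt} (hz : n ≤ minWeight z) : numReps (n - 1) z = 0 :=
    numReps_eq_zero (by omega)
  rw [numReps_gβ_mul_add_isUnit _ _ hu, unitQuotient_gβ_mul, Fin.sum_univ_four]
  simp only [Matrix.cons_val, vanish hy, vanish hyu, vanish hyiu, numReps_gβ_mul, zero_add,
    add_zero]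

lemma numReps_minWeight_gβ_sq_mul_add_isUnit (x : GaussianInt) {u : GaussianInt} (hu : IsUnit u) :
    numReps (minWeight x) (gβ * (gβ * x) + u) = numReps (minWeight x - 1) (x + gI * u) :=
  numReps_gβ_sq_mul_add_isUnit hu (minWeight_gβ_mul x).ge
    (minWeight_le_gβ_mul_add_isUnit x hu.neg)
    (minWeight_le_gβ_mul_add_isUnit x (isUnit_gI.mul hu).neg)

lemma numReps_minWeight_gβ_cube_mul_add_isUnit (x : GaussianInt) {u : GaussianInt}
    (hu : IsUnit u) :
    numReps (minWeight x) (gβ * (gβ * (gβ * x + u)) + u) =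
      numReps (minWeight x - 1) (x - gI * u) := by
  have hiu := isUnit_gI.mul hu
  have hquot : gβ * x + u + gI * u = gβ * (x - gI * u) := by grind [gβ_eq, gI_mul_gI]
  rw [numReps_gβ_sq_mul_add_isUnit hu, hquot, numReps_gβ_mul]
  · rw [minWeight_gβ_mul]
    exact minWeight_le_gβ_mul_add_isUnit x hu
  · convert minWeight_le_gβ_sq_mul_add_isUnit_add_isUnit x hiu.neg hiu using 2
    grind [gβ_eq, gI_mul_gI]
  · convert minWeight_le_gβ_mul_add_isUnit (gβ * x) hu.neg using 1
    · rw [minWeight_gβ_mul]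
    · grind [gβ_eq, gI_mul_gI]

lemma numReps_minWeight_gβ_cube_mul_sub_isUnit (x : GaussianInt) {u : GaussianInt}
    (hu : IsUnit u) :
    numReps (minWeight x) (gβ * (gβ * (gβ * x + u)) + -u) =
      numReps (minWeight x - 1) (x - u) := by
  have hiu := isUnit_gI.mul hu
  have hquot : gβ * x + u + gI * -u = gβ * (x - u) := by grind [gβ_eq, gI_mul_gI]
  rw [numReps_gβ_sq_mul_add_isUnit hu.neg, hquot, numReps_gβ_mul]
  · rw [minWeight_gβ_mul]
    exact minWeight_le_gβ_mul_add_isUnit x hu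
  · convert minWeight_le_gβ_mul_add_isUnit (gβ * x) hiu using 1
    · rw [minWeight_gβ_mul]
    · grind [gβ_eq, gI_mul_gI]
  · convert minWeight_le_gβ_sq_mul_add_isUnit_add_isUnit x hu.neg hu.neg using 2
    grind [gβ_eq, gI_mul_gI]

/-! ### The state vector -/

/-- The state of the matrix recursion at `x`: the number of optimal representations of `x`, followed
by the numbers of normalized representations of `x - iᵏ` and of `x - iᵏ(1 + i)`, for
`k = 0, 1, 2, 3`, with one nonzero digit less than an optimal representation of `x`. -/
def stateVec (x : GaussianInt) : Fin 9 → ℤ :=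
  let n : ℤ := minWeight x
  ![numReps n x,
    numReps (n - 1) (x - 1), numReps (n - 1) (x - gI),
    numReps (n - 1) (x + 1), numReps (n - 1) (x + gI),
    numReps (n - 1) (x - 1 - gI), numReps (n - 1) (x + 1 - gI),
    numReps (n - 1) (x + 1 + gI), numReps (n - 1) (x - 1 + gI)]

lemma stateVec_zero : stateVec 0 = e9 0 := by
  have hneg (z : GaussianInt) : numReps (-1) z = 0 := numReps_eq_zero (by omega)
  ext k
  fin_cases k <;> simp [stateVec, e9, minWeight_zero, numReps_zero_zero, hneg]

lemma stateVec_gI_mul (x : GaussianInt) : stateVec (gI * x) = stateVec x ᵥ* R9 := by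
  have rotate {z a : GaussianInt} (h : z = gI * a) :
      numReps (minWeight x - 1) z = numReps (minWeight x - 1) a := by
    rw [h, numReps_isUnit_mul isUnit_gI]
  have subOne : gI * x - 1 = gI * (x + gI) := by grind [gI_mul_gI]
  have subI : gI * x - gI = gI * (x - 1) := by ring
  have addOne : gI * x + 1 = gI * (x - gI) := by grind [gI_mul_gI]
  have addI : gI * x + gI = gI * (x + 1) := by ring
  have subOneSubI : gI * x - 1 - gI = gI * (x - 1 + gI) := by grind [gI_mul_gI]
  have addOneSubI : gI * x + 1 - gI = gI * (x - 1 - gI) := by grind [gI_mul_gI]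
  have addOneAddI : gI * x + 1 + gI = gI * (x + 1 - gI) := by grind [gI_mul_gI]
  have subOneAddI : gI * x - 1 + gI = gI * (x + 1 + gI) := by grind [gI_mul_gI]
  ext k
  fin_cases k <;>
    simp [stateVec, minWeight_isUnit_mul isUnit_gI, numReps_isUnit_mul isUnit_gI, R9,
      Matrix.vecMul, dotProduct, Fin.sum_univ_succ, rotate subOne, rotate subI, rotate addOne,
      rotate addI, rotate subOneSubI, rotate addOneSubI, rotate addOneAddI, rotate subOneAddI]

lemma stateVec_gβ_mul (x : GaussianInt) : stateVec (gβ * x) = stateVec x ᵥ* A0 := by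
  have vanish {u : GaussianInt} (hu : IsUnit u) : numReps (minWeight x - 1) (gβ * x + u) = 0 := by
    have := minWeight_le_gβ_mul_add_isUnit x hu
    exact numReps_eq_zero (by omega)
  have descend {z a : GaussianInt} (h : z = gβ * a) :
      numReps (minWeight x - 1) z = numReps (minWeight x - 1) a := by
    rw [h, numReps_gβ_mul]
  have subOne := sub_eq_add_neg (gβ * x) 1 ▸ vanish isUnit_one.neg
  have subI := sub_eq_add_neg (gβ * x) gI ▸ vanish isUnit_gI.neg
  have subOneSubI : gβ * x - 1 - gI = gβ * (x + gI) := by grind [gβ_eq, gI_mul_gI]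
  have addOneSubI : gβ * x + 1 - gI = gβ * (x - 1) := by grind [gβ_eq, gI_mul_gI]
  have addOneAddI : gβ * x + 1 + gI = gβ * (x - gI) := by grind [gβ_eq, gI_mul_gI]
  have subOneAddI : gβ * x - 1 + gI = gβ * (x + 1) := by grind [gβ_eq, gI_mul_gI]
  ext k
  fin_cases k <;>
    simp [stateVec, minWeight_gβ_mul, numReps_gβ_mul, A0, Matrix.vecMul, dotProduct,
      Fin.sum_univ_succ, subOne, subI, vanish isUnit_one, vanish isUnit_gI, descend subOneSubI,
      descend addOneSubI, descend addOneAddI, descend subOneAddI]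

lemma numReps_gβ_cube_mul_add_two (x : GaussianInt) :
    numReps (minWeight x) (gβ * (gβ * (gβ * x)) + 1 + 1) =
      numReps (minWeight x - 1) (x - gI) + numReps (minWeight x - 1) (x + 1) +
        numReps (minWeight x - 1) (x + 1 - gI) := by
  have htwo : gβ * (gβ * (gβ * x)) + 1 + 1 = gβ * (gβ * (gβ * x + gI)) := by
    grind [gβ_eq, gI_mul_gI]
  rw [htwo, numReps_gβ_mul, numReps_gβ_mul, numReps_minWeight_gβ_mul_add_isUnit x isUnit_gI]
  grind [gI_mul_gI]

lemma numReps_gβ_cube_mul_add_one (x : GaussianInt) :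
    numReps (minWeight x + 1) (gβ * (gβ * (gβ * x)) + 1) =
      numReps (minWeight x) x + 2 * numReps (minWeight x - 1) (x - gI) +
        2 * numReps (minWeight x - 1) (x + 1) + numReps (minWeight x - 1) (x + 1 - gI) := by
  have hneg : numReps (minWeight x) (gβ * (gβ * x) + -1) = numReps (minWeight x - 1) (x - gI) := by
    rw [numReps_minWeight_gβ_sq_mul_add_isUnit x isUnit_one.neg, mul_neg_one,
      ← sub_eq_add_neg]
  have hnegI : numReps (minWeight x) (gβ * (gβ * x) + -gI) = numReps (minWeight x - 1) (x + 1) := by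
    rw [numReps_minWeight_gβ_sq_mul_add_isUnit x isUnit_gI.neg, mul_neg, gI_mul_gI, neg_neg]
  have hplusI : numReps (minWeight x) (gβ * x + gI) = numReps (minWeight x - 1) (x - gI) +
      numReps (minWeight x - 1) (x + 1) + numReps (minWeight x - 1) (x + 1 - gI) := by
    rw [numReps_minWeight_gβ_mul_add_isUnit x isUnit_gI, gI_mul_gI, sub_neg_eq_add, sub_neg_eq_add,
      sub_add_eq_add_sub]
  rw [numReps_gβ_mul_add_isUnit _ _ isUnit_one, unitQuotient_gβ_mul, Fin.sum_univ_four]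
  simp only [Matrix.cons_val, mul_one, add_sub_cancel_right, numReps_gβ_mul, hneg, hnegI, hplusI]
  ring

lemma stateVec_gβ_cube_mul_add_one (x : GaussianInt) :
    stateVec (gβ * (gβ * (gβ * x)) + 1) = stateVec x ᵥ* A1 := by
  let n : ℤ := minWeight x
  let z : GaussianInt := gβ * (gβ * (gβ * x))
  have vanish {u : GaussianInt} (hu : IsUnit u) : numReps n (z + u) = 0 := by
    refine numReps_eq_zero ?_
    rw [minWeight_gβ_cube_mul_add_isUnit x hu]
    omega
  have subI : numReps n (z + 1 - gI) = numReps (n - 1) (x - gI) := by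
    rw [show z + 1 - gI = gβ * (gβ * (gβ * x) + -1) by grind [gβ_eq], numReps_gβ_mul,
      numReps_minWeight_gβ_sq_mul_add_isUnit x isUnit_one.neg, mul_neg_one, ← sub_eq_add_neg]
  have addI : numReps n (z + 1 + gI) = numReps (n - 1) (x + 1) := by
    rw [show z + 1 + gI = gβ * (gβ * (gβ * x) + -gI) by grind [gβ_eq, gI_mul_gI], numReps_gβ_mul,
      numReps_minWeight_gβ_sq_mul_add_isUnit x isUnit_gI.neg, mul_neg, gI_mul_gI, neg_neg]
  have subI' : numReps n (z - gI) = 0 := by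
    rw [sub_eq_add_neg, vanish isUnit_gI.neg]
  have addTwoSubI : numReps n (z + 1 + 1 - gI) = numReps (n - 1) (x - gI) := by
    rw [show z + 1 + 1 - gI = gβ * (gβ * (gβ * x + gI)) + -gI by grind [gβ_eq, gI_mul_gI],
      numReps_minWeight_gβ_cube_mul_sub_isUnit x isUnit_gI]
  have addTwoAddI : numReps n (z + 1 + 1 + gI) = numReps (n - 1) (x + 1) := by
    rw [show z + 1 + 1 + gI = gβ * (gβ * (gβ * x + gI)) + gI by grind [gβ_eq, gI_mul_gI],
      numReps_minWeight_gβ_cube_mul_add_isUnit x isUnit_gI, gI_mul_gI, sub_neg_eq_add]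
  ext k
  fin_cases k <;>
    simp [stateVec, minWeight_gβ_cube_mul_add_isUnit x isUnit_one, subI, addI, subI', addTwoSubI,
      addTwoAddI, vanish isUnit_gI, numReps_gβ_mul, numReps_gβ_cube_mul_add_one,
      numReps_gβ_cube_mul_add_two, A1, Matrix.vecMul, dotProduct, Fin.sum_univ_succ, n, z] <;>
    ring

lemma R9_mul_transpose : R9 * R9ᵀ = 1 := by
  unfold R9
  decide

lemma stateVec_gβ_cube_mul_add_gI_mul {u : GaussianInt} {A : Matrix (Fin 9) (Fin 9) ℤ}
    (hA : ∀ x, stateVec (gβ * (gβ * (gβ * x)) + u) = stateVec x ᵥ* A) (x : GaussianInt) :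
    stateVec (gβ * (gβ * (gβ * x)) + gI * u) = stateVec x ᵥ* (R9ᵀ * A * R9) := by
  obtain ⟨y, rfl⟩ : ∃ y, x = gI * y := isUnit_gI.dvd
  have hfactor : gβ * (gβ * (gβ * (gI * y))) + gI * u = gI * (gβ * (gβ * (gβ * y)) + u) := by ring
  rw [hfactor, stateVec_gI_mul, hA, stateVec_gI_mul]
  simp only [Matrix.vecMul_vecMul, ← mul_assoc, R9_mul_transpose, one_mul]

lemma stateVec_gβ_cube_mul_add_isUnit (x : GaussianInt) {u : GaussianInt} (hu : IsUnit u) :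
    stateVec (gβ * (gβ * (gβ * x)) + u) = stateVec x ᵥ* Amat u := by
  have hI (y : GaussianInt) : stateVec (gβ * (gβ * (gβ * y)) + gI) = stateVec y ᵥ* Ai := by
    rw [Ai, ← stateVec_gβ_cube_mul_add_gI_mul stateVec_gβ_cube_mul_add_one, mul_one]
  have hneg (y : GaussianInt) : stateVec (gβ * (gβ * (gβ * y)) + -1) = stateVec y ᵥ* Am1 := by
    rw [Am1, ← stateVec_gβ_cube_mul_add_gI_mul hI, gI_mul_gI]
  have hnegI (y : GaussianInt) : stateVec (gβ * (gβ * (gβ * y)) + -gI) = stateVec y ᵥ* Ami := by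
    rw [Ami, ← stateVec_gβ_cube_mul_add_gI_mul hneg, mul_neg_one]
  rcases gaussianInt_isUnit_iff.1 hu with rfl | rfl | rfl | rfl
  · simpa [Amat] using stateVec_gβ_cube_mul_add_one x
  · simpa [Amat, Zsqrtd.ext_iff, gI] using hI x
  · simpa [Amat, Zsqrtd.ext_iff, gI] using hneg x
  · simpa [Amat, Zsqrtd.ext_iff, gI] using hnegI x

/-! ### Concatenations of blocks -/

/-- The blocks of the code `C = {0, 001, 00i, 00(-1), 00(-i)}`, most significant digit first. -/
def IsBlock (b : List GaussianInt) : Prop :=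
  b = [0] ∨ ∃ d ∈ gD, d ≠ 0 ∧ b = [0, 0, d]

lemma IsBlock.gweight_eq {b : List GaussianInt} (hb : IsBlock b) :
    gweight b = gweight [b.getLastD 0] := by
  rcases hb with rfl | ⟨d, -, -, rfl⟩
  · rfl
  · simp only [gweight_cons_zero, List.getLastD_cons, List.getLastD_nil]

lemma IsBlock.stateVec_gval_reverse_append {b : List GaussianInt} (hb : IsBlock b)
    (l : List GaussianInt) :
    stateVec (gval (b.reverse ++ l)) = stateVec (gval l) ᵥ* Amat (b.getLastD 0) := by
  rcases hb with rfl | ⟨d, hd, hd0, rfl⟩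
  · simpa [Amat] using stateVec_gβ_mul (gval l)
  · have hu : IsUnit d := (mem_gD_iff.1 hd).resolve_left hd0
    simpa [add_comm d] using stateVec_gβ_cube_mul_add_isUnit (gval l) hu

lemma gweight_flatten {blocks : List (List GaussianInt)} (hblocks : ∀ b ∈ blocks, IsBlock b) :
    gweight blocks.flatten = gweight (blocks.map fun b => b.getLastD 0) := by
  induction blocks with
  | nil => rfl
  | cons b bs ih =>
    rw [List.forall_mem_cons] at hblocks
    rw [List.flatten_cons, gweight_append, List.map_cons, gweight_cons, ih hblocks.2,
      hblocks.1.gweight_eq]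

lemma stateVec_gval_flatten_reverse {blocks : List (List GaussianInt)}
    (hblocks : ∀ b ∈ blocks, IsBlock b) :
    stateVec (gval blocks.flatten.reverse) =
      e9 0 ᵥ* (blocks.map fun b => Amat (b.getLastD 0)).prod := by
  induction blocks using List.reverseRecOn with
  | nil => simp [stateVec_zero]
  | append_singleton bs b ih =>
    simp only [List.forall_mem_append, List.forall_mem_singleton] at hblocks
    simp only [List.flatten_append, List.flatten_singleton, List.reverse_append, List.map_append,
      List.map_singleton, List.prod_append, List.prod_singleton]
    rw [hblocks.2.stateVec_gval_reverse_append, ih hblocks.1, Matrix.vecMul_vecMul]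

lemma e9_mul_mul_transpose (P : Matrix (Fin 9) (Fin 9) ℤ) :
    (e9 * P * e9ᵀ) 0 0 = (e9 0 ᵥ* P) 0 := by
  simp [e9, Matrix.mul_apply, Matrix.vecMul, dotProduct, Fin.sum_univ_succ]

/-- If a representation of `x` (most significant digit first) is a
concatenation of blocks from `C = {0, 001, 00i, 00(-1), 00(-i)}`, then its
number of nonzero digits equals the number of blocks with nonzero last digit,
and the number of optimal representations of `x` is `e A_{d_1} ⋯ A_{d_n} eᵀ`,
where `d_ℓ` is the last digit of the `ℓ`-th block. -/
theorem stmt6 (x : GaussianInt) (blocks : List (List GaussianInt))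
    (hblocks : ∀ b ∈ blocks, b = [0] ∨ ∃ d ∈ gD, d ≠ 0 ∧ b = [0, 0, d])
    (hrep : gIsRep x blocks.flatten.reverse) :
    gweight blocks.flatten = gweight (blocks.map (fun b => b.getLastD 0)) ∧
    (gnumOpt x : ℤ) =
      (e9 * (blocks.map (fun b => Amat (b.getLastD 0))).prod * e9ᵀ) 0 0 := by
  refine ⟨gweight_flatten hblocks, ?_⟩
  rw [gnumOpt_eq_numReps, e9_mul_mul_transpose, ← stateVec_gval_flatten_reverse hblocks, hrep.2]
  rfl
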